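/- Let B_1, ..., B_b ⊆ {1, ..., n} be a collection of blocks whose bipartite incidence graph G (between points {1, ..., n} and blocks) satisfies: for any two disjoint nonempty subsets S, T ⊆ {1, ..., n} of points, the number of blocks meeting both S and T is at least |S| + |T| - 1 (i.e., |N(S) ∩ N(T)| ≥ |S| + |T| - 1). Then there exist vectors v_1, ..., v_b ∈ ℝ^n with supp(v_i) ⊆ B_i for each i such that the frame {e_1, ..., e_n} ∪ {v_1, ..., v_b} satisfies the Complement Property. -/

import Mathlib

open Matrix

/-- An indexed family of vectors in `ℝ^n` satisfies the Complement Property if for every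
partition of the index set into two parts, the vectors of at least one part span `ℝ^n`. -/
def ComplementPropertyFam {ι : Type*} {n : ℕ} (u : ι → Fin n → ℝ) : Prop :=
  ∀ I : Set ι, Submodule.span ℝ (u '' I) = ⊤ ∨ Submodule.span ℝ (u '' Iᶜ) = ⊤

lemma exists_common_nonzero {ι σ : Type*} [Fintype ι] (p : ι → MvPolynomial σ ℝ)
    (hp : ∀ i, p i ≠ 0) : ∃ x : σ → ℝ, ∀ i, MvPolynomial.eval x (p i) ≠ 0 := by
  classical
  have h : (∏ i, p i) ≠ 0 := Finset.prod_ne_zero_iff.2 fun i _ => hp i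
  by_contra hcon
  push Not at hcon
  apply h
  apply MvPolynomial.funext
  intro x
  obtain ⟨i, hi⟩ := hcon x
  rw [map_prod, map_zero]
  exact Finset.prod_eq_zero (Finset.mem_univ i) hi

open Classical in
lemma exists_generic (n b : ℕ) (B : Fin b → Finset (Fin n)) :
    ∃ v : Fin b → Fin n → ℝ, (∀ i, ∀ j : Fin n, v i j ≠ 0 → j ∈ B i) ∧
      ∀ (C : Finset (Fin n)) (f : C → Fin b), Function.Injective f → (∀ j : C, j.1 ∈ B (f j)) →
        (Matrix.of fun j k : C => v (f j) k.1).det ≠ 0 := by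
  let M : Fin b → Fin n → MvPolynomial (Fin b × Fin n) ℝ :=
    fun i j => if j ∈ B i then MvPolynomial.X (i, j) else 0
  let good : (Σ C : Finset (Fin n), (C → Fin b)) → Prop := fun q =>
    Function.Injective q.2 ∧ ∀ j : q.1, j.1 ∈ B (q.2 j)
  let p : {q // good q} → MvPolynomial (Fin b × Fin n) ℝ := fun q =>
    (Matrix.of fun j k : q.1.1 => M (q.1.2 j) k.1).det
  have hdet : ∀ (x : Fin b × Fin n → ℝ) (q), MvPolynomial.eval x (p q) =
      (Matrix.of fun j k : q.1.1 => if k.1 ∈ B (q.1.2 j) then x (q.1.2 j, k.1) else 0).det := by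
    intro x q
    simp only [p]
    rw [RingHom.map_det]
    congr 1
    ext j k
    simp only [RingHom.mapMatrix_apply, Matrix.map_apply, Matrix.of_apply, M]
    split_ifs <;> simp
  have hp : ∀ q, p q ≠ 0 := by
    rintro ⟨⟨C, f⟩, hf, hB⟩ h0
    have h1 := hdet (fun z => if ∃ j : C, f j = z.1 ∧ j.1 = z.2 then 1 else 0) ⟨⟨C, f⟩, hf, hB⟩
    rw [h0, map_zero] at h1
    have h2 : (Matrix.of fun j k : C => if k.1 ∈ B (f j) then
        (if ∃ l : C, f l = f j ∧ l.1 = k.1 then (1 : ℝ) else 0) else 0) = 1 := by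
      ext j k
      rw [Matrix.of_apply, Matrix.one_apply]
      by_cases hjk : j = k
      · subst hjk
        rw [if_pos (hB j), if_pos ⟨j, rfl, rfl⟩, if_pos rfl]
      · rw [if_neg hjk]
        have : ¬ ∃ l : C, f l = f j ∧ l.1 = k.1 := by
          rintro ⟨l, h3, h4⟩
          exact hjk ((hf h3).symm.trans (Subtype.ext h4))
        rw [if_neg this, ite_self]
    have h3 := congrArg Matrix.det h2
    rw [Matrix.det_one] at h3
    exact zero_ne_one (h1.trans h3)
  obtain ⟨x, hx⟩ := exists_common_nonzero p hp
  refine ⟨fun i j => if j ∈ B i then x (i, j) else 0, ?_, ?_⟩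
  · intro i j h
    by_contra hc
    exact h (if_neg hc)
  · intro C f hf hB
    have := hx ⟨⟨C, f⟩, hf, hB⟩
    rw [hdet] at this
    exact this

lemma span_top_of_det {n b : ℕ} (v : Fin b → Fin n → ℝ) (W : Submodule ℝ (Fin n → ℝ))
    (C : Finset (Fin n)) (f : C → Fin b) (he : ∀ k, k ∉ C → (Pi.single k 1 : Fin n → ℝ) ∈ W)
    (hv : ∀ j, v (f j) ∈ W) (hd : (Matrix.of fun j k : C => v (f j) k.1).det ≠ 0) : W = ⊤ := by
  classical
  rw [eq_top_iff]
  intro x _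
  set M : Matrix C C ℝ := Matrix.of fun j k : C => v (f j) k.1 with hM
  let c : C → ℝ := (fun k : C => x k.1) ᵥ* M⁻¹
  have hc : c ᵥ* M = fun k : C => x k.1 := by
    simp only [c]
    rw [Matrix.vecMul_vecMul, Matrix.nonsing_inv_mul _ (isUnit_iff_ne_zero.2 hd),
      Matrix.vecMul_one]
  let y : Fin n → ℝ := ∑ j, c j • v (f j)
  have hy : y ∈ W := W.sum_mem fun j _ => W.smul_mem _ (hv j)
  have hxy : ∀ k ∈ C, (x - y) k = 0 := by
    intro k hk
    have := congrFun hc ⟨k, hk⟩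
    simp only [Matrix.vecMul, dotProduct, hM, Matrix.of_apply] at this
    simp [y, Finset.sum_apply, ← this]
  have h : x - y ∈ W := by
    rw [pi_eq_sum_univ' (x - y)]
    refine W.sum_mem fun k _ => ?_
    by_cases hk : k ∈ C
    · rw [hxy k hk, zero_smul]; exact W.zero_mem
    · have h2 := W.smul_mem ((x - y) k) (he k hk)
      convert h2 using 2
  have := W.add_mem h hy
  simpa using this

open Classical in
lemma hall_alt {n b : ℕ} (B : Fin b → Finset (Fin n)) (J : Set (Fin b)) (C : Finset (Fin n)) :
    (∃ f : C → Fin b, Function.Injective f ∧ (∀ j : C, j.1 ∈ B (f j)) ∧ ∀ j, f j ∈ J) ∨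
    ∃ S ⊆ C, (Finset.univ.filter fun i => i ∈ J ∧ (S ∩ B i).Nonempty).card < S.card := by
  by_cases h : ∀ s : Finset C, s.card ≤
      (s.biUnion fun j => Finset.univ.filter fun i => i ∈ J ∧ j.1 ∈ B i).card
  · left
    obtain ⟨f, hf, h2⟩ := (Finset.all_card_le_biUnion_card_iff_exists_injective _).1 h
    refine ⟨f, hf, fun j => ?_, fun j => ?_⟩
    · exact (Finset.mem_filter.1 (h2 j)).2.2
    · exact (Finset.mem_filter.1 (h2 j)).2.1
  · right
    push Not at h
    obtain ⟨s, hs⟩ := h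
    refine ⟨s.map (Function.Embedding.subtype _), ?_, ?_⟩
    · intro x hx
      obtain ⟨y, _, rfl⟩ := Finset.mem_map.1 hx
      exact y.2
    · rw [Finset.card_map]
      refine lt_of_le_of_lt (Finset.card_le_card ?_) hs
      intro i hi
      obtain ⟨-, hJ, z, hz⟩ := Finset.mem_filter.1 hi
      obtain ⟨hz1, hz2⟩ := Finset.mem_inter.1 hz
      obtain ⟨y, hy, rfl⟩ := Finset.mem_map.1 hz1
      exact Finset.mem_biUnion.2 ⟨y, hy, Finset.mem_filter.2 ⟨Finset.mem_univ _, hJ, hz2⟩⟩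

theorem stmt12 (n b : ℕ) (B : Fin b → Finset (Fin n))
    (hexp : ∀ S T : Finset (Fin n), S.Nonempty → T.Nonempty → Disjoint S T →
      S.card + T.card - 1 ≤
        (Finset.univ.filter (fun i => (S ∩ B i).Nonempty ∧ (T ∩ B i).Nonempty)).card) :
    ∃ v : Fin b → Fin n → ℝ,
      (∀ i, ∀ j : Fin n, v i j ≠ 0 → j ∈ B i) ∧
      ComplementPropertyFam
        (Sum.elim (fun k : Fin n => (Pi.single k 1 : Fin n → ℝ)) v) := by
  classical
  obtain ⟨v, hv, hdet⟩ := exists_generic n b B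
  refine ⟨v, hv, fun I => ?_⟩
  set u := Sum.elim (fun k : Fin n => (Pi.single k 1 : Fin n → ℝ)) v with hu
  have key : ∀ K : Set (Fin n ⊕ Fin b), Submodule.span ℝ (u '' K) = ⊤ ∨
      ∃ S : Finset (Fin n), (∀ k ∈ S, Sum.inl k ∉ K) ∧
        (Finset.univ.filter fun i => Sum.inr i ∈ K ∧ (S ∩ B i).Nonempty).card < S.card := by
    intro K
    rcases hall_alt B {i | Sum.inr i ∈ K} (Finset.univ.filter fun k => Sum.inl k ∉ K) with
      ⟨f, hf, hB, hK⟩ | ⟨S, hS, hc⟩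
    · left
      refine span_top_of_det v _ _ f ?_ ?_ (hdet _ f hf hB)
      · intro k hk
        have hk : Sum.inl k ∈ K := by simpa using hk
        exact Submodule.subset_span ⟨_, hk, rfl⟩
      · intro j
        exact Submodule.subset_span ⟨_, hK j, rfl⟩
    · right
      exact ⟨S, fun k hk => (Finset.mem_filter.1 (hS hk)).2, hc⟩
  rcases key I with h | ⟨S, hS, hSc⟩
  · exact Or.inl h
  rcases key Iᶜ with h | ⟨T, hT, hTc⟩
  · exact Or.inr h
  exfalso
  have hSn : S.Nonempty := Finset.card_pos.1 (by omega)
  have hTn : T.Nonempty := Finset.card_pos.1 (by omega)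
  have hdis : Disjoint S T := Finset.disjoint_left.2 fun k h1 h2 => hT k h2 (hS k h1)
  have h1 := hexp S T hSn hTn hdis
  have h2 : (Finset.univ.filter
        (fun i => (S ∩ B i).Nonempty ∧ (T ∩ B i).Nonempty)).card ≤
      (Finset.univ.filter fun i => Sum.inr i ∈ I ∧ (S ∩ B i).Nonempty).card +
      (Finset.univ.filter fun i => Sum.inr i ∈ Iᶜ ∧ (T ∩ B i).Nonempty).card := by
    refine le_trans (Finset.card_le_card ?_) (Finset.card_union_le _ _)
    intro i hi
    obtain ⟨-, ha, hb⟩ := Finset.mem_filter.1 hi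
    rw [Finset.mem_union, Finset.mem_filter, Finset.mem_filter]
    by_cases h : Sum.inr i ∈ I
    · exact Or.inl ⟨Finset.mem_univ _, h, ha⟩
    · exact Or.inr ⟨Finset.mem_univ _, h, hb⟩
  have h3 : (Finset.univ.filter fun i => Sum.inr i ∈ Iᶜ ∧ (T ∩ B i).Nonempty).card <
      T.card := by
    convert hTc
  omega
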